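/- Let A be a finite-dimensional real affine space with affine basis (R_0, …, R_n), and let B be a real affine space (a torsor over a real vector space). Given points Q_{ij} ∈ B for 0 ≤ i, j ≤ n with Q_{ij} = Q_{ji}, there exists a unique quadratic map δ : A → B such that δ(midpoint(R_i, R_j)) = Q_{ij} for all i, j. Moreover δ is given by δ(P) = Σ_{i,j} p_i p_j · Δ_{ij}, where (p_0, …, p_n) are the barycentric coordinates of P and Δ_{ij} = 2·Q_{ij} − (1/2)·Q_{ii} − (1/2)·Q_{jj} (an affine combination in B; note that Σ_{i,j} p_i p_j = 1, so the formula is a well-defined affine combination of the points Δ_{ij}). -/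

import Mathlib

/-!
For a quadratic map `D : A → W` into a vector space, put
`T(X, Y) = 2 D(midpoint X Y) - D(X)/2 - D(Y)/2`, so that `T` is symmetric and `T(X, X) = D(X)`.
The claim reduces to `T` being affine in each variable, because then
`D(P) = T(P, P) = Σ p_i p_j T(R_i, R_j)`.

With the origin placed at `X`, `T(X, ·)` is a constant plus half the odd part `L` of `D`, so it
suffices that the odd part of a quadratic map on a vector space is linear
(`VecQuad.odd_smul`, `VecQuad.odd_add`). Homogeneity comes from the quadratic identity on lines
through the origin. For additivity, set `e = L a + L d - 2 L((a + d)/2)`; the quadratic identity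
and homogeneity give `L(α a + β d) = α L a + β L d - (2αβ/(α+β)) e` for `α + β ≠ 0`. Along the line
`k ↦ k a + d` the third difference of a quadratic map vanishes, whereas that of `k/(k+1)` at
`k = 0` is `1/4`; hence `e = 0`.

Existence is the direct verification that the formula defines a quadratic map with the prescribed
values at midpoints.
-/

/-- A map `δ` between real affine spaces is *quadratic* if for all points `P, Q` and
all `α, β ∈ ℝ` with `α + β = 1`,
`δ(α·P + β·Q)` is the affine combination of `δ(P)`, `δ(Q)`, `δ(midpoint P Q)` with
weights `α(α − β)`, `β(β − α)`, `4αβ` (note `α·P + β·Q = lineMap P Q β`). -/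
def IsQuadraticMap {V A W B : Type*} [AddCommGroup V] [Module ℝ V] [AddTorsor V A]
    [AddCommGroup W] [Module ℝ W] [AddTorsor W B] (δ : A → B) : Prop :=
  ∀ (P Q : A) (α β : ℝ), α + β = 1 →
    δ (AffineMap.lineMap P Q β) =
      ((α * (α - β)) • (δ P -ᵥ δ (midpoint ℝ P Q)) +
        (β * (β - α)) • (δ Q -ᵥ δ (midpoint ℝ P Q))) +ᵥ δ (midpoint ℝ P Q)

/-- The quadratic-map identity for a map between vector spaces, in vector notation. -/
def VecQuad {V W : Type*} [AddCommGroup V] [Module ℝ V] [AddCommGroup W] [Module ℝ W]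
    (h : V → W) : Prop :=
  ∀ (x y : V) (α β : ℝ), α + β = 1 →
    h (α • x + β • y) = (α * (α - β)) • h x + (β * (β - α)) • h y +
      (4 * α * β) • h ((1 / 2 : ℝ) • (x + y))

/-- Twice the odd part of a quadratic map is homogeneous of degree one. -/
theorem VecQuad.odd_smul {V W : Type*} [AddCommGroup V] [Module ℝ V] [AddCommGroup W]
    [Module ℝ W] {h : V → W} (hh : VecQuad h) (t : ℝ) (v : V) :
    h (t • v) - h (-(t • v)) = t • (h v - h (-v)) := by
  have h1 := hh (-v) v ((1 - t) / 2) ((1 + t) / 2) (by ring)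
  have h2 := hh (-v) v ((1 + t) / 2) ((1 - t) / 2) (by ring)
  rw [show ((1 - t) / 2) • (-v) + ((1 + t) / 2) • v = t • v by module] at h1
  rw [show ((1 + t) / 2) • (-v) + ((1 - t) / 2) • v = -(t • v) by module] at h2
  rw [h1, h2]
  module

theorem VecQuad.odd {V W : Type*} [AddCommGroup V] [Module ℝ V] [AddCommGroup W]
    [Module ℝ W] {h : V → W} (hh : VecQuad h) : VecQuad (fun v => h v - h (-v)) := by
  intro x y α β hαβ
  have h1 := hh x y α β hαβ
  have h2 := hh (-x) (-y) α β hαβ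
  rw [show α • (-x) + β • (-y) = -(α • x + β • y) by module,
    show (1 / 2 : ℝ) • (-x + -y) = -((1 / 2 : ℝ) • (x + y)) by module] at h2
  simp only [h1, h2]
  module

/-- A quadratic map that is homogeneous of degree one is additive. -/
theorem VecQuad.add_of_smul {V W : Type*} [AddCommGroup V] [Module ℝ V] [AddCommGroup W]
    [Module ℝ W] {L : V → W} (hL : VecQuad L) (hs : ∀ (t : ℝ) (v : V), L (t • v) = t • L v)
    (a d : V) : L (a + d) = L a + L d := by
  have key : ∀ k : ℝ, k + 1 ≠ 0 → L (k • a + d) =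
      k • L a + L d - (2 * k / (k + 1)) • (L a + L d - L (a + d)) := by
    intro k hk
    have h1 := hL a d (k / (k + 1)) (1 / (k + 1)) (by field_simp)
    have h2 := hs (k + 1) ((k / (k + 1)) • a + (1 / (k + 1)) • d)
    rw [h1, hs (1 / 2), show (k + 1) • ((k / (k + 1)) • a + (1 / (k + 1)) • d) = k • a + d by
      match_scalars <;> field_simp] at h2
    rw [h2]
    match_scalars <;> field_simp <;> ring
  have k1 := key 1 (by norm_num)
  have k2 := key 2 (by norm_num)
  have k3 := key 3 (by norm_num)
  -- Extrapolation to `3a + d` from `d`, `a + d`, `2a + d`: the vanishing third difference.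
  have h3 := hL d ((2 : ℝ) • a + d) (-1 / 2) (3 / 2) (by norm_num)
  rw [show (-1 / 2 : ℝ) • d + (3 / 2 : ℝ) • ((2 : ℝ) • a + d) = (3 : ℝ) • a + d by module,
    show (1 / 2 : ℝ) • (d + ((2 : ℝ) • a + d)) = (1 : ℝ) • a + d by module, k1, k2, k3] at h3
  have h4 : (1 / 2 : ℝ) • (L a + L d - L (a + d)) = 0 := by
    rw [← sub_eq_zero] at h3
    rw [← neg_eq_zero, ← h3]
    module
  have h5 := (smul_eq_zero.1 h4).resolve_left (by norm_num)
  exact (sub_eq_zero.1 h5).symm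

theorem VecQuad.odd_add {V W : Type*} [AddCommGroup V] [Module ℝ V] [AddCommGroup W]
    [Module ℝ W] {h : V → W} (hh : VecQuad h) (a d : V) :
    h (a + d) - h (-(a + d)) = (h a - h (-a)) + (h d - h (-d)) :=
  hh.odd.add_of_smul (fun t v => hh.odd_smul t v) a d

/-- Placing an origin `X` in `A` and `c` in `B` turns a quadratic map into a `VecQuad` map. -/
theorem IsQuadraticMap.vecQuad {V A W B : Type*} [AddCommGroup V] [Module ℝ V] [AddTorsor V A]
    [AddCommGroup W] [Module ℝ W] [AddTorsor W B] {δ : A → B} (hδ : IsQuadraticMap δ)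
    (X : A) (c : B) : VecQuad (fun v : V => δ (v +ᵥ X) -ᵥ c) := by
  intro x y α β hαβ
  have h1 := hδ (x +ᵥ X) (y +ᵥ X) α β hαβ
  obtain rfl : α = 1 - β := by linarith
  have e1 : AffineMap.lineMap (x +ᵥ X) (y +ᵥ X) β = ((1 - β) • x + β • y) +ᵥ X := by
    rw [AffineMap.lineMap_apply, vadd_vsub_vadd_cancel_right, vadd_vadd]
    congr 1
    module
  have e2 : midpoint ℝ (x +ᵥ X) (y +ᵥ X) = ((1 / 2 : ℝ) • (x + y)) +ᵥ X := by
    rw [midpoint, AffineMap.lineMap_apply, vadd_vsub_vadd_cancel_right, vadd_vadd]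
    congr 1
    rw [invOf_eq_inv]
    module
  rw [e1, e2] at h1
  simp only [h1]
  rw [vadd_vsub_assoc, ← vsub_sub_vsub_cancel_right (δ (x +ᵥ X)) _ c,
    ← vsub_sub_vsub_cancel_right (δ (y +ᵥ X)) _ c]
  module

/-- The polarization `T(X, Y) = 2 δ(midpoint X Y) - δ(X)/2 - δ(Y)/2` of `δ`, measured from the
origin `c` of `B`. -/
noncomputable def polarMap {V A W B : Type*} [AddCommGroup V] [Module ℝ V] [AddTorsor V A]
    [AddCommGroup W] [Module ℝ W] [AddTorsor W B] (δ : A → B) (c : B) (X Y : A) : W :=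
  (2 : ℝ) • (δ (midpoint ℝ X Y) -ᵥ c) - (1 / 2 : ℝ) • (δ X -ᵥ c) - (1 / 2 : ℝ) • (δ Y -ᵥ c)

/-- The polarization of a quadratic map is affine in its second variable. -/
theorem IsQuadraticMap.polarMap_affine {V A W B : Type*} [AddCommGroup V] [Module ℝ V]
    [AddTorsor V A] [AddCommGroup W] [Module ℝ W] [AddTorsor W B] {δ : A → B}
    (hδ : IsQuadraticMap δ) (c : B) (X : A) :
    ∃ f : A →ᵃ[ℝ] W, ∀ Y, f Y = polarMap δ c X Y := by
  have hh := hδ.vecQuad X c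
  let L : V →ₗ[ℝ] W :=
    { toFun := fun v => (δ (v +ᵥ X) -ᵥ c) - (δ (-v +ᵥ X) -ᵥ c)
      map_add' := hh.odd_add
      map_smul' := hh.odd_smul }
  refine ⟨AffineMap.mk (fun Y => (δ X -ᵥ c) + (1 / 4 : ℝ) • L (Y -ᵥ X)) ((1 / 4 : ℝ) • L) ?_, ?_⟩
  · intro p v
    simp only [vadd_vsub_assoc, map_add, LinearMap.smul_apply, vadd_eq_add]
    module
  · intro Y
    -- The value at the midpoint `v/2` comes from the quadratic identity on the line `-v`, `v`.
    have h1 := hh (-(Y -ᵥ X)) (Y -ᵥ X) (1 / 4) (3 / 4) (by norm_num)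
    have e1 : ((1 / 4 : ℝ) • (-(Y -ᵥ X)) + (3 / 4 : ℝ) • (Y -ᵥ X)) +ᵥ X = midpoint ℝ X Y := by
      rw [midpoint, AffineMap.lineMap_apply, invOf_eq_inv]
      congr 1
      module
    simp only [e1, neg_add_cancel, smul_zero, zero_vadd, vsub_vadd] at h1
    change (δ X -ᵥ c) + (1 / 4 : ℝ) • ((δ ((Y -ᵥ X) +ᵥ X) -ᵥ c) - (δ (-(Y -ᵥ X) +ᵥ X) -ᵥ c)) = _
    rw [polarMap, h1, vsub_vadd]
    module

theorem polarMap_comm {V A W B : Type*} [AddCommGroup V] [Module ℝ V]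
    [AddTorsor V A] [AddCommGroup W] [Module ℝ W] [AddTorsor W B] (δ : A → B)
    (c : B) (X Y : A) : polarMap δ c X Y = polarMap δ c Y X := by
  rw [polarMap, polarMap, midpoint_comm]
  module

theorem polarMap_self {V A W B : Type*} [AddCommGroup V] [Module ℝ V]
    [AddTorsor V A] [AddCommGroup W] [Module ℝ W] [AddTorsor W B] (δ : A → B)
    (c : B) (X : A) : polarMap δ c X X = δ X -ᵥ c := by
  rw [polarMap, midpoint_self]
  module

theorem IsQuadraticMap.polarMap_eq_sum {V A W B ι : Type*} [AddCommGroup V] [Module ℝ V]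
    [AddTorsor V A] [AddCommGroup W] [Module ℝ W] [AddTorsor W B] [Fintype ι] {δ : A → B}
    (hδ : IsQuadraticMap δ) (c : B) (b : AffineBasis ι ℝ A) (X P : A) :
    polarMap δ c X P = ∑ i, b.coord i P • polarMap δ c X (b i) := by
  obtain ⟨f, hf⟩ := hδ.polarMap_affine c X
  have h1 := congrArg f (b.affineCombination_coord_eq_self P)
  rw [Finset.map_affineCombination _ _ _ (b.sum_coord_apply_eq_one P),
    Finset.affineCombination_eq_linear_combination _ _ _ (b.sum_coord_apply_eq_one P)] at h1
  simpa [hf] using h1.symm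

theorem affineCombination_vsub {W B ι : Type*} [AddCommGroup W] [Module ℝ W] [AddTorsor W B]
    [Fintype ι] (w : ι → ℝ) (p : ι → B) (hw : ∑ i, w i = 1) (c : B) :
    Finset.univ.affineCombination ℝ p w -ᵥ c = ∑ i, w i • (p i -ᵥ c) := by
  rw [Finset.affineCombination_eq_weightedVSubOfPoint_vadd_of_sum_eq_one _ _ _ hw c,
    vadd_vsub, Finset.weightedVSubOfPoint_apply]

theorem delta_vsub {W B : Type*} [AddCommGroup W] [Module ℝ W] [AddTorsor W B]
    (x y z c : B) :
    Finset.univ.affineCombination ℝ ![x, y, z] ![(2 : ℝ), -(1/2 : ℝ), -(1/2 : ℝ)] -ᵥ c =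
      (2 : ℝ) • (x -ᵥ c) - (1 / 2 : ℝ) • (y -ᵥ c) - (1 / 2 : ℝ) • (z -ᵥ c) := by
  rw [affineCombination_vsub _ _ (by simp [Fin.sum_univ_three]; norm_num)]
  simp only [Fin.sum_univ_three, Matrix.cons_val]
  module

theorem sum_coord_mul {V A ι : Type*} [AddCommGroup V] [Module ℝ V] [AddTorsor V A]
    [Fintype ι] (b : AffineBasis ι ℝ A) (P : A) :
    ∑ ij : ι × ι, b.coord ij.1 P * b.coord ij.2 P = 1 := by
  rw [Fintype.sum_prod_type]
  dsimp only
  rw [← Finset.sum_mul_sum, b.sum_coord_apply_eq_one, one_mul]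

theorem sum_coord_midpoint {V A W ι : Type*} [AddCommGroup V] [Module ℝ V] [AddTorsor V A]
    [AddCommGroup W] [Module ℝ W] [Fintype ι] (b : AffineBasis ι ℝ A) (i j : ι) (f : ι → W) :
    ∑ k, b.coord k (midpoint ℝ (b i) (b j)) • f k = (1 / 2 : ℝ) • f i + (1 / 2 : ℝ) • f j := by
  classical
  simp only [midpoint, AffineMap.apply_lineMap, AffineMap.lineMap_apply_module, invOf_eq_inv,
    smul_eq_mul, b.coord_apply, add_smul, mul_smul, Finset.sum_add_distrib, ← Finset.smul_sum,
    ite_smul, one_smul, zero_smul, Finset.sum_ite_eq', Finset.mem_univ, if_true]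
  module

/-- A map given by a quadratic form in barycentric coordinates is quadratic. -/
theorem isQuadraticMap_of_sum {V A W B ι : Type*} [AddCommGroup V] [Module ℝ V]
    [AddTorsor V A] [AddCommGroup W] [Module ℝ W] [AddTorsor W B] [Fintype ι]
    (b : AffineBasis ι ℝ A) (δ : A → B) (c : B) (D : ι × ι → W)
    (h : ∀ P, δ P -ᵥ c = ∑ ij : ι × ι, (b.coord ij.1 P * b.coord ij.2 P) • D ij) :
    IsQuadraticMap δ := by
  intro P Q α β hαβ
  obtain rfl : α = 1 - β := by linarith
  apply vsub_left_injective c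
  change _ -ᵥ c = _ -ᵥ c
  rw [vadd_vsub_assoc, ← vsub_sub_vsub_cancel_right (δ P) _ c,
    ← vsub_sub_vsub_cancel_right (δ Q) _ c, h, h, h, h]
  simp only [← Finset.sum_sub_distrib, Finset.smul_sum, ← Finset.sum_add_distrib]
  refine Finset.sum_congr rfl fun ij _ => ?_
  simp only [midpoint, AffineMap.apply_lineMap, AffineMap.lineMap_apply_module, invOf_eq_inv,
    smul_eq_mul]
  module

/-- Let `A` be a finite-dimensional real affine space with affine basis
`(R_0, …, R_n)` and `B` a real affine space.  Given points `Q i j ∈ B` with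
`Q i j = Q j i`, there is a unique quadratic map `δ : A → B` with
`δ(midpoint (R i) (R j)) = Q i j`; moreover it is given by
`δ(P) = Σ_{i,j} p_i p_j • Δ_{i j}` where `p` are the barycentric coordinates of `P` and
`Δ_{i j} = 2•Q_{i j} − (1/2)•Q_{i i} − (1/2)•Q_{j j}` (an affine combination in `B`). -/
theorem stmt0 {V A W B : Type*} [AddCommGroup V] [Module ℝ V] [AddTorsor V A]
    [FiniteDimensional ℝ V] [AddCommGroup W] [Module ℝ W] [AddTorsor W B]
    {n : ℕ} (b : AffineBasis (Fin (n + 1)) ℝ A)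
    (Q : Fin (n + 1) → Fin (n + 1) → B) (hQ : ∀ i j, Q i j = Q j i) :
    (∃! δ : A → B, IsQuadraticMap δ ∧
        ∀ i j, δ (midpoint ℝ (b i) (b j)) = Q i j) ∧
    (∀ δ : A → B, IsQuadraticMap δ →
        (∀ i j, δ (midpoint ℝ (b i) (b j)) = Q i j) →
        ∀ P : A,
          δ P = Finset.univ.affineCombination ℝ
            (fun ij : Fin (n + 1) × Fin (n + 1) =>
              Finset.univ.affineCombination ℝ
                ![Q ij.1 ij.2, Q ij.1 ij.1, Q ij.2 ij.2]
                ![(2 : ℝ), -(1/2 : ℝ), -(1/2 : ℝ)])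
            (fun ij : Fin (n + 1) × Fin (n + 1) => b.coord ij.1 P * b.coord ij.2 P)) := by
  have c : B := Q 0 0
  have formula : ∀ δ : A → B, IsQuadraticMap δ →
      (∀ i j, δ (midpoint ℝ (b i) (b j)) = Q i j) →
      ∀ P : A,
        δ P = Finset.univ.affineCombination ℝ
          (fun ij : Fin (n + 1) × Fin (n + 1) =>
            Finset.univ.affineCombination ℝ
              ![Q ij.1 ij.2, Q ij.1 ij.1, Q ij.2 ij.2]
              ![(2 : ℝ), -(1/2 : ℝ), -(1/2 : ℝ)])
          (fun ij : Fin (n + 1) × Fin (n + 1) => b.coord ij.1 P * b.coord ij.2 P) := by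
    intro δ hδ hm P
    have hd : ∀ i, δ (b i) = Q i i := fun i => by rw [← hm i i, midpoint_self]
    apply vsub_left_injective c
    change _ -ᵥ c = _ -ᵥ c
    rw [affineCombination_vsub _ _ (sum_coord_mul b P), ← polarMap_self,
      hδ.polarMap_eq_sum c b P P, Fintype.sum_prod_type]
    refine Finset.sum_congr rfl fun i _ => ?_
    rw [polarMap_comm, hδ.polarMap_eq_sum c b (b i) P, Finset.smul_sum]
    refine Finset.sum_congr rfl fun j _ => ?_
    rw [delta_vsub, smul_smul, polarMap, hm, hd, hd]
  refine ⟨?_, formula⟩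
  refine ⟨fun P => Finset.univ.affineCombination ℝ
      (fun ij : Fin (n + 1) × Fin (n + 1) =>
        Finset.univ.affineCombination ℝ
          ![Q ij.1 ij.2, Q ij.1 ij.1, Q ij.2 ij.2]
          ![(2 : ℝ), -(1/2 : ℝ), -(1/2 : ℝ)])
      (fun ij : Fin (n + 1) × Fin (n + 1) => b.coord ij.1 P * b.coord ij.2 P), ⟨?_, ?_⟩, ?_⟩
  · exact isQuadraticMap_of_sum b _ c _ fun P => affineCombination_vsub _ _ (sum_coord_mul b P) c
  · intro i j
    apply vsub_left_injective c
    change _ -ᵥ c = _ -ᵥ c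
    rw [affineCombination_vsub _ _ (sum_coord_mul b _), Fintype.sum_prod_type]
    simp only [delta_vsub, mul_smul, ← Finset.smul_sum, sum_coord_midpoint]
    rw [hQ j i]
    module
  · rintro δ ⟨hδ, hm⟩
    funext P
    exact formula δ hδ hm P
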